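/- Let b be a prime, let alpha >= 2 be an integer, and let P be a digital net over F_b with generating matrices C_1,...,C_s in F_b^{n x m}, with dual net P^perp. Then for every real lambda > 1/alpha, the series sum_{z=0}^infty b^{(1/alpha - lambda) z} (z+2)^{s*alpha - 1} converges and sum_{k in P^perp \ {0}} b^{-lambda mu_alpha(k)} <= 2^{s*alpha - 1} (b-1)^{s*alpha} (mu_alpha(P^perp))^{s*alpha - 1} b^{-lambda mu_alpha(P^perp)} sum_{z=0}^infty b^{(1/alpha - lambda) z} (z+2)^{s*alpha - 1}. -/

import Mathlib

open MeasureTheory Finset Matrix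

noncomputable section

/-- The `i`-th `b`-adic digit of a natural number `k`. -/
def ndigit (b k i : ℕ) : ℕ := k / b ^ i % b

/-- The truncated digit vector `ν_n(k) ∈ F_b^n`. -/
def digitVec (b n : ℕ) (k : ℕ) : Fin n → ZMod b := fun i => (ndigit b k i.val : ZMod b)

/-- The dual net of the digital net with generating matrices `C_1,...,C_s ∈ F_b^{n×m}`. -/
def dualNet {s n m : ℕ} (b : ℕ) (C : Fin s → Matrix (Fin n) (Fin m) (ZMod b)) :
    Set (Fin s → ℕ) :=
  {k | ∑ j, (C j)ᵀ.mulVec (digitVec b n (k j)) = 0}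

/-- The list of positions (in decreasing order) of the nonzero `b`-adic digits of `k`;
position `i` corresponds to the digit of `b^i`, i.e. to the exponent `c - 1` in the paper. -/
def nzPos (b k : ℕ) : List ℕ :=
  (((Finset.range k).filter fun i => ndigit b k i ≠ 0).sort (· ≤ ·)).reverse

/-- The Dick weight function `μ_α` (for `α = 1` the NRT weight). -/
def dickWeight (b α k : ℕ) : ℕ := (((nzPos b k).take α).map (· + 1)).sum

/-- The Dick weight of a vector of nonnegative integers. -/
def dickWeightV (b α : ℕ) {s : ℕ} (k : Fin s → ℕ) : ℕ := ∑ j, dickWeight b α (k j)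

/-- `μ_α(P^⊥)`, the minimal Dick weight over nonzero elements of the dual net. -/
def minWeight {s n m : ℕ} (b α : ℕ) (C : Fin s → Matrix (Fin n) (Fin m) (ZMod b)) : ℕ :=
  sInf (dickWeightV b α '' {k | k ∈ dualNet b C ∧ k ≠ 0})

/-- The list `κ_1 b^{c_1-1}, κ_2 b^{c_2-1}, ...` of nonzero terms of the `b`-adic
expansion of `k`, in decreasing order of the exponents. -/
def nzTerms (b k : ℕ) : List ℕ := (nzPos b k).map fun i => ndigit b k i * b ^ i

/-- `k^{(p)}`: the number `k` with its `p` most significant nonzero digits removed. -/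
def trunc (b p k : ℕ) : ℕ := ((nzTerms b k).drop p).sum

/-- The term `κ_p b^{c_p-1}` (with the convention `κ_0 b^{c_0-1} = 0`). -/
def topTerm (b p k : ℕ) : ℕ := if p = 0 then 0 else (nzTerms b k).getD (p - 1) 0

/-- `(k,l)` is of type `(p,q)`. -/
def IsType (b p q k l : ℕ) : Prop :=
  if k = l then p = 0 ∧ q = 0
  else trunc b p k = trunc b q l ∧ topTerm b p k ≠ topTerm b q l

/-- `(k,l) ∈ T_{≥ α}`: `(k,l)` is of type `(p,q)` for some `p + q ≥ α`. -/
def TGe (b α k l : ℕ) : Prop := ∃ p q : ℕ, α ≤ p + q ∧ IsType b p q k l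

/-- `(k,l) ∈ T_{≥ α}` for vectors: some coordinate pair lies in `T_{≥ α}`. -/
def TGeV (b α : ℕ) {s : ℕ} (k l : Fin s → ℕ) : Prop := ∃ j, TGe b α (k j) (l j)

/-- The `(i+1)`-st `b`-adic digit `ξ_{i+1}` of `x ∈ [0,1]` (for `x ≠ 1` the unique expansion
with infinitely many digits different from `b-1`; for `x = 1` all digits equal `b-1`). -/
def rdigit (b : ℕ) (x : ℝ) (i : ℕ) : ℕ :=
  if x = 1 then b - 1 else (⌊x * (b : ℝ) ^ (i + 1)⌋).toNat % b

/-- The `k`-th `b`-adic Walsh function. -/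
def walsh (b k : ℕ) (x : ℝ) : ℂ :=
  Complex.exp (2 * (Real.pi : ℂ) * Complex.I *
    ((∑ i ∈ Finset.range k, ndigit b k i * rdigit b x i : ℕ) : ℂ) / (b : ℂ))

/-- The multivariate `b`-adic Walsh function. -/
def walshV (b : ℕ) {s : ℕ} (k : Fin s → ℕ) (x : Fin s → ℝ) : ℂ := ∏ j, walsh b (k j) (x j)

/-- The unit cube `[0,1]^s`. -/
def cube (s : ℕ) : Set (Fin s → ℝ) := Set.univ.pi fun _ => Set.Icc 0 1

/-- The `(k,l)`-th Walsh coefficient of a kernel `K : [0,1]^s × [0,1]^s → ℝ`. -/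
def walshCoeff (b : ℕ) {s : ℕ} (K : (Fin s → ℝ) → (Fin s → ℝ) → ℝ) (k l : Fin s → ℕ) : ℂ :=
  ∫ x in cube s, ∫ y in cube s,
    (K x y : ℂ) * (starRingEnd ℂ) (walshV b k x) * walshV b l y

/-- The `b`-adic digital shift `x ⊕ y` of reals `x, y ∈ [0,1]`. -/
def dshift (b : ℕ) (x y : ℝ) : ℝ :=
  ∑' i : ℕ, (((rdigit b x i + rdigit b y i) % b : ℕ) : ℝ) / (b : ℝ) ^ (i + 1)

/-- Componentwise digital shift of vectors in `[0,1]^s`. -/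
def dshiftV (b : ℕ) {s : ℕ} (x y : Fin s → ℝ) : Fin s → ℝ := fun j => dshift b (x j) (y j)

/-- The `h`-th point of the digital net with generating matrices `C_1,...,C_s ∈ F_b^{n×m}`. -/
def netPoint {s n m : ℕ} (b : ℕ) (C : Fin s → Matrix (Fin n) (Fin m) (ZMod b)) (h : ℕ) :
    Fin s → ℝ :=
  fun j => ∑ i : Fin n, (((C j).mulVec (digitVec b m h) i).val : ℝ) / (b : ℝ) ^ (i.val + 1)

open Classical in
/-- The squared `L_2`-discrepancy of the point multiset `pts 0, ..., pts (N-1)` in `[0,1]^s`. -/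
def sqL2 {s : ℕ} (N : ℕ) (pts : ℕ → (Fin s → ℝ)) : ℝ :=
  ∫ y in cube s,
    ((∑ h ∈ Finset.range N, if ∀ j, 0 ≤ pts h j ∧ pts h j < y j then (1 : ℝ) else 0) / N
      - ∏ j, y j) ^ 2

/-- The Bernoulli polynomial `B_r` evaluated at a real `x`. -/
def bpoly (r : ℕ) (x : ℝ) : ℝ := Polynomial.aeval x (Polynomial.bernoulli r)

/-- The one-dimensional reproducing kernel `K_α` of the Sobolev space of smoothness `α`. -/
def sobKer1 (α : ℕ) (x y : ℝ) : ℝ :=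
  ∑ r ∈ Finset.range (α + 1), bpoly r x * bpoly r y / ((r.factorial : ℝ)) ^ 2
    + (-1 : ℝ) ^ (α + 1) * bpoly (2 * α) |x - y| / ((2 * α).factorial : ℝ)

/-- The `s`-fold product kernel `K_{α,s}`. -/
def sobKer (α : ℕ) {s : ℕ} (x y : Fin s → ℝ) : ℝ := ∏ j, sobKer1 α (x j) (y j)

/-- The constant `C_{τ,b}`. -/
def Ctau (b τ : ℕ) : ℝ :=
  if τ ≤ 1 then 1 / (2 * Real.sin (Real.pi / b))
  else (1 + 1 / (b : ℝ) + 1 / ((b : ℝ) * ((b : ℝ) + 1))) ^ (τ - 2)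
      / (2 * Real.sin (Real.pi / b)) ^ τ

end

/-!
Fix the positions and values of the `α` leading nonzero digits in every coordinate of `k`, and let
`ν` be the number of digits that remain free. The leading positions all lie above the free ones, so
`α * (ν + 1) ≤ μ_α(k)` as soon as `ν > 0`. Two elements of the dual net that differ only in the
lowest `r_j` digits of each coordinate `j` have a digitwise difference of weight at most
`α * ∑ r_j`, so they coincide when `α * ∑ r_j < μ = μ_α(P^⊥)`. Hence, as in the proof of the
Singleton bound for codes, forgetting `⌈μ / α⌉ - 1` of the free digits loses no information, and at
most `b ^ ⌊z / α⌋` elements of weight `z + μ` share given leading digits. The leading positions are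
nonnegative integers with sum `z + μ`, which leaves at most `(z + μ + 1) ^ (s * α - 1)` choices; the
leading digits contribute `(b - 1) ^ (s * α)`. Summing over `z` gives the bound.
-/

section Digits

variable {b : ℕ}

theorem ndigit_lt (hb : 0 < b) (k i : ℕ) : ndigit b k i < b :=
  Nat.mod_lt _ hb

theorem ndigit_eq_zero_of_lt_pow {k i : ℕ} (hk : k < b ^ i) : ndigit b k i = 0 := by
  rw [ndigit, Nat.div_eq_of_lt hk, Nat.zero_mod]

theorem ndigit_div_pow (k r i : ℕ) : ndigit b (k / b ^ r) i = ndigit b k (r + i) := by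
  rw [ndigit, ndigit, Nat.div_div_eq_div_mul, pow_add]

theorem ndigit_injective (hb : 1 < b) : Function.Injective (ndigit b) := by
  intro k l hkl
  have hlt : k + l < b ^ (k + l) := Nat.lt_pow_self hb
  let k' : Fin (b ^ (k + l)) := ⟨k, by omega⟩
  let l' : Fin (b ^ (k + l)) := ⟨l, by omega⟩
  suffices k' = l' from congrArg Fin.val this
  apply finFunctionFinEquiv.symm.injective
  funext i
  apply Fin.ext
  rw [finFunctionFinEquiv_symm_apply_val, finFunctionFinEquiv_symm_apply_val]
  exact congrFun hkl i

theorem exists_lt_pow_natCast_ndigit_eq [NeZero b] (r : ℕ) (d : ℕ → ZMod b) :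
    ∃ x < b ^ r, ∀ i < r, (ndigit b x i : ZMod b) = d i := by
  let f : Fin r → Fin b := fun i => ⟨(d i).val, ZMod.val_lt _⟩
  refine ⟨finFunctionFinEquiv f, Fin.is_lt _, fun i hi => ?_⟩
  have hdigit : ndigit b (finFunctionFinEquiv f) i = (d i).val := by
    rw [ndigit, ← finFunctionFinEquiv_symm_apply_val _ (⟨i, hi⟩ : Fin r),
      Equiv.symm_apply_apply]
  rw [hdigit, ZMod.natCast_zmod_val]

theorem natCast_ndigit_inj (hb : 0 < b) {k l i : ℕ} :
    (ndigit b k i : ZMod b) = ndigit b l i ↔ ndigit b k i = ndigit b l i := by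
  rw [ZMod.natCast_eq_natCast_iff', Nat.mod_eq_of_lt (ndigit_lt hb k i),
    Nat.mod_eq_of_lt (ndigit_lt hb l i)]

theorem exists_lt_pow_natCast_ndigit_eq_sub [NeZero b] {k l r : ℕ} (h : k / b ^ r = l / b ^ r) :
    ∃ x < b ^ r, ∀ i, (ndigit b x i : ZMod b) = ndigit b k i - ndigit b l i := by
  obtain ⟨x, hxr, hx⟩ :=
    exists_lt_pow_natCast_ndigit_eq r fun i => (ndigit b k i - ndigit b l i : ZMod b)
  refine ⟨x, hxr, fun i => ?_⟩
  rcases lt_or_ge i r with hi | hi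
  · exact hx i hi
  · have hx0 : ndigit b x i = 0 :=
      ndigit_eq_zero_of_lt_pow (hxr.trans_le (Nat.pow_le_pow_right (NeZero.pos b) hi))
    have hkl : ndigit b k i = ndigit b l i := by
      rw [← Nat.add_sub_cancel' hi, ← ndigit_div_pow, ← ndigit_div_pow, h]
    rw [hx0, hkl, Nat.cast_zero, sub_self]

end Digits

section LeadingDigits

variable {b k l p i α : ℕ}

/-- The position `c_{i+1}` of the `(i+1)`-st most significant nonzero digit of `k`, counted from `1`
as in the definition of the Dick weight; it is `0` if `k` has at most `i` nonzero digits. -/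
def leadPos (b k i : ℕ) : ℕ := ((nzPos b k).map (· + 1)).getD i 0

/-- The `(i+1)`-st most significant nonzero digit of `k`. If there is none the value is `1`, so that
it always lies in `{1, ..., b - 1}`. -/
def leadDigit (b k i : ℕ) : ℕ :=
  if leadPos b k i = 0 then 1 else ndigit b k (leadPos b k i - 1)

theorem mem_nzPos (hb : 1 < b) : p ∈ nzPos b k ↔ ndigit b k p ≠ 0 := by
  simp only [nzPos, List.mem_reverse, Finset.mem_sort, Finset.mem_filter, Finset.mem_range,
    and_iff_right_iff_imp]
  intro hp
  by_contra! hkp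
  exact hp (ndigit_eq_zero_of_lt_pow (hkp.trans_lt (Nat.lt_pow_self hb)))

theorem sortedGT_nzPos (b k : ℕ) : (nzPos b k).SortedGT :=
  (Finset.sortedLT_sort _).reverse

theorem leadPos_eq_getElem_add_one (h : i < (nzPos b k).length) :
    leadPos b k i = (nzPos b k)[i] + 1 := by
  simp [leadPos, h]

theorem lt_length_nzPos_of_leadPos_ne_zero (h : leadPos b k i ≠ 0) : i < (nzPos b k).length := by
  by_contra! hi
  exact h (by simp [leadPos, hi])

theorem ndigit_ne_zero_of_leadPos_eq (hb : 1 < b) (h : leadPos b k i = p + 1) :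
    ndigit b k p ≠ 0 := by
  have hi : i < (nzPos b k).length := lt_length_nzPos_of_leadPos_ne_zero (by omega)
  rw [leadPos_eq_getElem_add_one hi, Nat.add_right_cancel_iff] at h
  rw [← mem_nzPos hb, ← h]
  exact List.getElem_mem hi

theorem exists_leadPos_eq (hb : 1 < b) (h : ndigit b k p ≠ 0) : ∃ i, leadPos b k i = p + 1 := by
  obtain ⟨i, hi, rfl⟩ := List.getElem_of_mem ((mem_nzPos hb).mpr h)
  exact ⟨i, leadPos_eq_getElem_add_one hi⟩

theorem leadPos_lt_leadPos {i' : ℕ} (h : i < i') (h0 : leadPos b k i' ≠ 0) :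
    leadPos b k i' < leadPos b k i := by
  have hi' := lt_length_nzPos_of_leadPos_ne_zero h0
  rw [leadPos_eq_getElem_add_one hi', leadPos_eq_getElem_add_one (h.trans hi')]
  exact Nat.add_lt_add_right
    (List.pairwise_iff_getElem.mp (sortedGT_nzPos b k).pairwise i i' (h.trans hi') hi' h) 1

theorem antitone_leadPos (b k : ℕ) : Antitone (leadPos b k) := by
  intro i i' h
  rcases h.eq_or_lt with rfl | h
  · exact le_rfl
  · rcases eq_or_ne (leadPos b k i') 0 with h0 | h0
    · omega
    · exact (leadPos_lt_leadPos h h0).le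

theorem leadPos_le_of_lt_pow (hb : 1 < b) {r : ℕ} (hk : k < b ^ r) (i : ℕ) :
    leadPos b k i ≤ r := by
  by_contra! hr
  obtain ⟨p, hp⟩ := Nat.exists_eq_add_one.mpr (Nat.zero_lt_of_lt hr)
  have hpow : b ^ r ≤ b ^ p := Nat.pow_le_pow_right (by omega) (by omega)
  exact ndigit_ne_zero_of_leadPos_eq hb hp (ndigit_eq_zero_of_lt_pow (hk.trans_le hpow))

theorem leadDigit_mem_Icc (hb : 1 < b) (k i : ℕ) : leadDigit b k i ∈ Finset.Icc 1 (b - 1) := by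
  rw [Finset.mem_Icc, leadDigit]
  split_ifs with h
  · omega
  · have hpos : ndigit b k (leadPos b k i - 1) ≠ 0 :=
      ndigit_ne_zero_of_leadPos_eq hb (Nat.succ_pred_eq_of_ne_zero h).symm
    have hlt := ndigit_lt (Nat.zero_lt_of_lt hb) k (leadPos b k i - 1)
    omega

theorem exists_lt_leadPos_eq (hb : 1 < b) (hα : 0 < α) (hp : leadPos b k (α - 1) - 1 ≤ p)
    (h : ndigit b k p ≠ 0) : ∃ i < α, leadPos b k i = p + 1 := by
  obtain ⟨i, hi⟩ := exists_leadPos_eq hb h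
  refine ⟨i, ?_, hi⟩
  by_contra! hαi
  have := leadPos_lt_leadPos (b := b) (k := k) (show α - 1 < i by omega) (by omega)
  omega

theorem ndigit_eq_of_leading_eq_of_ne_zero (hb : 1 < b) (hα : 0 < α)
    (hpos : ∀ i < α, leadPos b k i = leadPos b l i)
    (hdig : ∀ i < α, leadDigit b k i = leadDigit b l i)
    (hp : leadPos b k (α - 1) - 1 ≤ p) (h : ndigit b k p ≠ 0) :
    ndigit b k p = ndigit b l p := by
  obtain ⟨i, hiα, hi⟩ := exists_lt_leadPos_eq hb hα hp h
  simpa [leadDigit, ← hpos i hiα, hi] using hdig i hiα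

theorem ndigit_eq_of_leading_eq (hb : 1 < b) (hα : 0 < α)
    (hpos : ∀ i < α, leadPos b k i = leadPos b l i)
    (hdig : ∀ i < α, leadDigit b k i = leadDigit b l i)
    (hp : leadPos b k (α - 1) - 1 ≤ p) : ndigit b k p = ndigit b l p := by
  by_cases hk : ndigit b k p = 0
  · by_cases hl : ndigit b l p = 0
    · rw [hk, hl]
    · exact (ndigit_eq_of_leading_eq_of_ne_zero hb hα (fun i hi => (hpos i hi).symm)
        (fun i hi => (hdig i hi).symm) (by rwa [← hpos _ (by omega)]) hl).symm
  · exact ndigit_eq_of_leading_eq_of_ne_zero hb hα hpos hdig hp hk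

theorem div_pow_eq_of_leading_eq (hb : 1 < b) (hα : 0 < α)
    (hpos : ∀ i < α, leadPos b k i = leadPos b l i)
    (hdig : ∀ i < α, leadDigit b k i = leadDigit b l i) :
    k / b ^ (leadPos b k (α - 1) - 1) = l / b ^ (leadPos b k (α - 1) - 1) := by
  apply ndigit_injective hb
  funext i
  rw [ndigit_div_pow, ndigit_div_pow]
  exact ndigit_eq_of_leading_eq hb hα hpos hdig (Nat.le_add_right _ i)

end LeadingDigits

section DickWeight

variable {b k α : ℕ}

theorem sum_take_eq_sum_range_getD {M : Type*} [AddCommMonoid M] (l : List M) (n : ℕ) :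
    (l.take n).sum = ∑ i ∈ range n, l.getD i 0 := by
  induction l generalizing n with
  | nil => simp
  | cons x l ih =>
    cases n with
    | zero => simp
    | succ n => rw [Finset.sum_range_succ']; simp [ih, add_comm]

theorem dickWeight_eq_sum_leadPos (b α k : ℕ) : dickWeight b α k = ∑ i : Fin α, leadPos b k i := by
  rw [dickWeight, List.map_take, sum_take_eq_sum_range_getD, Finset.sum_range]
  rfl

theorem dickWeight_le_mul_of_lt_pow (hb : 1 < b) (α : ℕ) {r : ℕ} (hk : k < b ^ r) :
    dickWeight b α k ≤ α * r := by
  simpa [dickWeight_eq_sum_leadPos] using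
    Finset.sum_le_card_nsmul univ (fun i : Fin α => leadPos b k i) r
      fun i _ => leadPos_le_of_lt_pow hb hk i

theorem mul_leadPos_le_dickWeight (b α k : ℕ) : α * leadPos b k (α - 1) ≤ dickWeight b α k := by
  simpa [dickWeight_eq_sum_leadPos] using
    Finset.card_nsmul_le_sum univ (fun i : Fin α => leadPos b k i) (leadPos b k (α - 1))
      fun i _ => antitone_leadPos b k (Nat.le_sub_one_of_lt i.isLt)

theorem dickWeight_pos (hb : 1 < b) (hα : 0 < α) (hk : k ≠ 0) : 0 < dickWeight b α k := by
  obtain ⟨p, hp⟩ : ∃ p, ndigit b k p ≠ ndigit b 0 p :=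
    Function.ne_iff.mp ((ndigit_injective hb).ne hk)
  obtain ⟨i, hi⟩ := exists_leadPos_eq hb (by simpa [ndigit] using hp)
  have h0 : 0 < leadPos b k 0 := by
    have := antitone_leadPos b k (Nat.zero_le i)
    omega
  rw [dickWeight_eq_sum_leadPos]
  exact Finset.sum_pos' (fun _ _ => Nat.zero_le _) ⟨⟨0, hα⟩, mem_univ _, h0⟩

theorem dickWeightV_pos (hb : 1 < b) (hα : 0 < α) {s : ℕ} {k : Fin s → ℕ} (hk : k ≠ 0) :
    0 < dickWeightV b α k := by
  obtain ⟨j, hj⟩ := Function.ne_iff.mp hk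
  exact Finset.sum_pos' (fun _ _ => Nat.zero_le _) ⟨j, mem_univ _, dickWeight_pos hb hα hj⟩

end DickWeight

section SingletonBound

variable {ι : Type*} [Fintype ι]

/-- `D` has minimum distance larger than `t` in the Niederreiter–Rosenbloom–Tsfasman metric: two
elements of `D` which in each coordinate `j` differ at most in the `r j` lowest digits, where
`∑ j, r j ≤ t`, are equal. -/
def NRTSeparated (b t : ℕ) (D : Set (ι → ℕ)) : Prop :=
  ∀ k ∈ D, ∀ l ∈ D, ∀ r : ι → ℕ, ∑ j, r j ≤ t → (∀ j, k j / b ^ r j = l j / b ^ r j) → k = l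

theorem NRTSeparated.mono {b t : ℕ} {D D' : Set (ι → ℕ)} (hD : NRTSeparated b t D)
    (h : D' ⊆ D) : NRTSeparated b t D' :=
  fun k hk l hl => hD k (h hk) l (h hl)

theorem exists_le_sum_eq (L : ι → ℕ) {e : ℕ} (he : e ≤ ∑ j, L j) : ∃ r ≤ L, ∑ j, r j = e := by
  obtain ⟨r, hrL, hr⟩ := Finsupp.exists_le_degree_eq (Finsupp.equivFunOnFinite.symm L) e
    (by simpa [Finsupp.degree_eq_sum] using he)
  exact ⟨r, fun j => hrL j, by rwa [← Finsupp.degree_eq_sum]⟩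

theorem NRTSeparated.card_le_pow_sub {b t : ℕ} (hb : 0 < b) {F : Finset (ι → ℕ)}
    (hF : NRTSeparated b t (F : Set (ι → ℕ))) (L : ι → ℕ)
    (hL : ∀ k ∈ F, ∀ l ∈ F, ∀ j, k j / b ^ L j = l j / b ^ L j) :
    #F ≤ b ^ (∑ j, L j - t) := by
  classical
  obtain ⟨r, hrL, hr⟩ := exists_le_sum_eq L (min_le_left (∑ j, L j) t)
  have hsum : ∑ j, (L j - r j) = ∑ j, L j - t := by
    rw [Finset.sum_tsub_distrib _ fun j _ => hrL j, hr]
    omega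
  have hcard : #(Fintype.piFinset fun j => range (b ^ (L j - r j))) = b ^ (∑ j, L j - t) := by
    rw [Fintype.card_piFinset, ← hsum, ← Finset.prod_pow_eq_pow_sum]
    simp only [card_range]
  rw [← hcard]
  refine Finset.card_le_card_of_injOn (fun k j => k j / b ^ r j % b ^ (L j - r j)) ?_ ?_
  · intro k _
    simp [Nat.mod_lt, hb]
  · intro k hk l hl hkl
    refine hF k hk l hl r (hr ▸ min_le_right _ _) fun j => ?_
    have hhigh : k j / b ^ r j / b ^ (L j - r j) = l j / b ^ r j / b ^ (L j - r j) := by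
      rw [Nat.div_div_eq_div_mul, Nat.div_div_eq_div_mul, ← pow_add, Nat.add_sub_cancel' (hrL j)]
      exact hL k hk l hl j
    have hlow : k j / b ^ r j % b ^ (L j - r j) = l j / b ^ r j % b ^ (L j - r j) :=
      congrFun hkl j
    rw [← Nat.div_add_mod (k j / b ^ r j) (b ^ (L j - r j)), hhigh, hlow, Nat.div_add_mod]

end SingletonBound

section Counting

variable {b α s t w : ℕ}

/-- The positions and values of the `α` leading nonzero digits of each coordinate of `k`. -/
def leadPattern {ι : Type*} (b α : ℕ) (k : ι → ℕ) : (ι × Fin α → ℕ) × (ι × Fin α → ℕ) :=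
  (fun x => leadPos b (k x.1) x.2, fun x => leadDigit b (k x.1) x.2)

theorem card_piAntidiag_univ_le {ι : Type*} [Fintype ι] [DecidableEq ι] (w : ℕ) :
    #(piAntidiag (univ : Finset ι) w) ≤ (w + 1) ^ (Fintype.card ι - 1) := by
  rw [← map_sym_eq_piAntidiag, card_map, sym_univ, card_univ, Sym.card_sym_eq_choose]
  rcases Nat.eq_zero_or_pos (Fintype.card ι) with h | h
  · rw [h, zero_add, zero_tsub, pow_zero]
    cases w <;> simp
  · rw [show Fintype.card ι + w - 1 = w + (Fintype.card ι - 1) by omega, Nat.choose_symm_add]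
    exact Nat.choose_add_le_add_one_pow w _

theorem leadPattern_mem (hb : 1 < b) {k : Fin s → ℕ} (hk : dickWeightV b α k = w) :
    leadPattern b α k ∈
      piAntidiag univ w ×ˢ Fintype.piFinset fun _ : Fin s × Fin α => Icc 1 (b - 1) := by
  rw [mem_product, mem_piAntidiag, Fintype.mem_piFinset]
  refine ⟨⟨?_, fun _ _ => mem_univ _⟩, fun x => leadDigit_mem_Icc hb _ _⟩
  simp only [← hk, leadPattern, dickWeightV, dickWeight_eq_sum_leadPos, Fintype.sum_prod_type]

theorem sum_leadPos_sub_one_eq_zero_or_lt_div (hα : 0 < α) (k : Fin s → ℕ) :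
    ∑ j, (leadPos b (k j) (α - 1) - 1) = 0 ∨
      ∑ j, (leadPos b (k j) (α - 1) - 1) < dickWeightV b α k / α := by
  refine or_iff_not_imp_left.mpr fun h => ?_
  obtain ⟨j, -, hj⟩ := Finset.exists_ne_zero_of_sum_ne_zero h
  calc ∑ j, (leadPos b (k j) (α - 1) - 1) < ∑ j, leadPos b (k j) (α - 1) :=
        Finset.sum_lt_sum (fun _ _ => Nat.sub_le _ _) ⟨j, mem_univ _, by omega⟩
    _ ≤ dickWeightV b α k / α := by
        rw [Nat.le_div_iff_mul_le hα, mul_comm, Finset.mul_sum]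
        exact Finset.sum_le_sum fun j _ => mul_leadPos_le_dickWeight b α (k j)

theorem NRTSeparated.card_le_of_leadPattern_eq (hb : 1 < b) (hα : 0 < α)
    {F : Finset (Fin s → ℕ)} (hF : NRTSeparated b t (F : Set (Fin s → ℕ)))
    (hw : ∀ k ∈ F, dickWeightV b α k = w) {a : (Fin s × Fin α → ℕ) × (Fin s × Fin α → ℕ)}
    (ha : ∀ k ∈ F, leadPattern b α k = a) : #F ≤ b ^ (w / α - (t + 1)) := by
  rcases F.eq_empty_or_nonempty with rfl | ⟨k₀, hk₀⟩
  · simp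
  have hdiv : ∀ k ∈ F, ∀ j, k₀ j / b ^ (leadPos b (k₀ j) (α - 1) - 1) =
      k j / b ^ (leadPos b (k₀ j) (α - 1) - 1) := by
    intro k hk j
    have hpat := (ha k₀ hk₀).trans (ha k hk).symm
    exact div_pow_eq_of_leading_eq hb hα
      (fun i hi => congrFun (congrArg Prod.fst hpat) (j, ⟨i, hi⟩))
      (fun i hi => congrFun (congrArg Prod.snd hpat) (j, ⟨i, hi⟩))
  refine (hF.card_le_pow_sub (by omega) _ fun k hk l hl j =>
    (hdiv k hk j).symm.trans (hdiv l hl j)).trans (Nat.pow_le_pow_right (by omega) ?_)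
  have hfree := sum_leadPos_sub_one_eq_zero_or_lt_div (b := b) hα k₀
  rw [hw k₀ hk₀] at hfree
  omega

theorem NRTSeparated.card_le_of_dickWeightV_eq (hb : 1 < b) (hα : 0 < α)
    {F : Finset (Fin s → ℕ)} (hF : NRTSeparated b t (F : Set (Fin s → ℕ)))
    (hw : ∀ k ∈ F, dickWeightV b α k = w) :
    #F ≤ b ^ (w / α - (t + 1)) * ((w + 1) ^ (s * α - 1) * (b - 1) ^ (s * α)) := by
  classical
  calc #F ≤ b ^ (w / α - (t + 1)) * #(piAntidiag univ w ×ˢ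
          Fintype.piFinset fun _ : Fin s × Fin α => Icc 1 (b - 1)) :=
        Finset.card_le_mul_card_image_of_maps_to (f := leadPattern b α)
          (fun k hk => leadPattern_mem hb (hw k hk)) _ fun a _ =>
            (hF.mono (filter_subset _ F)).card_le_of_leadPattern_eq hb hα
              (fun k hk => hw k (mem_filter.mp hk).1) fun k hk => (mem_filter.mp hk).2
    _ ≤ b ^ (w / α - (t + 1)) * ((w + 1) ^ (s * α - 1) * (b - 1) ^ (s * α)) := by
        rw [card_product]
        gcongr
        · simpa using card_piAntidiag_univ_le (ι := Fin s × Fin α) w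
        · simp

end Counting

section DualNet

variable {b α s n m : ℕ} {C : Fin s → Matrix (Fin n) (Fin m) (ZMod b)}

theorem minWeight_le {k : Fin s → ℕ} (hk : k ∈ dualNet b C) (hk0 : k ≠ 0) :
    minWeight b α C ≤ dickWeightV b α k :=
  Nat.sInf_le ⟨k, ⟨hk, hk0⟩, rfl⟩

theorem minWeight_pos (hb : 1 < b) (hα : 0 < α) {k : Fin s → ℕ} (hk : k ∈ dualNet b C)
    (hk0 : k ≠ 0) : 0 < minWeight b α C := by
  obtain ⟨l, ⟨-, hl0⟩, hl⟩ := Nat.sInf_mem (⟨_, k, ⟨hk, hk0⟩, rfl⟩ :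
    (dickWeightV b α '' {k | k ∈ dualNet b C ∧ k ≠ 0}).Nonempty)
  exact (dickWeightV_pos hb hα hl0).trans_eq hl

theorem mem_dualNet_of_natCast_ndigit_eq_sub {k l x : Fin s → ℕ} (hk : k ∈ dualNet b C)
    (hl : l ∈ dualNet b C)
    (hx : ∀ j i, (ndigit b (x j) i : ZMod b) = ndigit b (k j) i - ndigit b (l j) i) :
    x ∈ dualNet b C := by
  have hvec : ∀ j, digitVec b n (x j) = digitVec b n (k j) - digitVec b n (l j) :=
    fun j => funext fun i => hx j i
  simp only [dualNet, Set.mem_ofPred_eq] at hk hl ⊢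
  simp only [hvec, Matrix.mulVec_sub, Finset.sum_sub_distrib, hk, hl, sub_zero]

theorem nrtSeparated_dualNet (hb : 1 < b) (hα : 0 < α) :
    NRTSeparated b ((minWeight b α C - 1) / α) (dualNet b C) := by
  intro k hk l hl r hr hkl
  have : NeZero b := ⟨by omega⟩
  choose x hxr hx using fun j => exists_lt_pow_natCast_ndigit_eq_sub (hkl j)
  have hxC : x ∈ dualNet b C := mem_dualNet_of_natCast_ndigit_eq_sub hk hl hx
  have hweight : dickWeightV b α x ≤ minWeight b α C - 1 :=
    calc dickWeightV b α x ≤ α * ∑ j, r j := by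
          rw [Finset.mul_sum]
          exact Finset.sum_le_sum fun j _ => dickWeight_le_mul_of_lt_pow hb α (hxr j)
      _ ≤ minWeight b α C - 1 := (Nat.mul_le_mul_left α hr).trans (Nat.mul_div_le _ α)
  have hx0 : x = 0 := by
    by_contra hx0
    have hmin := minWeight_le (α := α) hxC hx0
    have hpos := minWeight_pos hb hα hxC hx0
    omega
  funext j
  apply ndigit_injective hb
  funext i
  rw [← natCast_ndigit_inj (by omega), ← sub_eq_zero, ← hx, hx0]
  simp [ndigit]

theorem card_le_of_dickWeightV_eq_add_minWeight (hb : 1 < b) (hα : 0 < α) {z : ℕ}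
    {F : Finset (Fin s → ℕ)} (hF : ∀ k ∈ F, k ∈ dualNet b C)
    (hw : ∀ k ∈ F, dickWeightV b α k = z + minWeight b α C) :
    #F ≤ b ^ (z / α) *
      ((z + minWeight b α C + 1) ^ (s * α - 1) * (b - 1) ^ (s * α)) := by
  refine (((nrtSeparated_dualNet hb hα).mono hF).card_le_of_dickWeightV_eq hb hα hw).trans ?_
  gcongr
  · exact hb.le
  set q := (minWeight b α C - 1) / α + 1
  have hμ : minWeight b α C ≤ α * q := by
    have : minWeight b α C - 1 < α * q := Nat.lt_mul_div_succ (minWeight b α C - 1) hα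
    omega
  rw [tsub_le_iff_right]
  calc (z + minWeight b α C) / α ≤ (z + α * q) / α := by gcongr
    _ = z / α + q := Nat.add_mul_div_left z q hα

end DualNet

section Series

theorem summable_rpow_mul_add_pow {x c : ℝ} (hx : 1 < x) (hc : c < 0) (a N : ℕ) :
    Summable fun z : ℕ => x ^ (c * (z : ℝ)) * ((z : ℝ) + a) ^ N := by
  have hx0 : 0 < x := by linarith
  have hr0 : 0 < x ^ c := Real.rpow_pos_of_pos hx0 c
  have hgeom : Summable fun z : ℕ => (z : ℝ) ^ N * (x ^ c) ^ z := by
    apply summable_pow_mul_geometric_of_norm_lt_one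
    rw [Real.norm_of_nonneg hr0.le]
    exact Real.rpow_lt_one_of_one_lt_of_neg hx hc
  refine (((summable_nat_add_iff a).mpr hgeom).mul_left ((x ^ c) ^ a)⁻¹).congr fun z => ?_
  rw [Real.rpow_mul hx0.le, Real.rpow_natCast, pow_add, Nat.cast_add]
  field_simp

theorem summable_comp_and_tsum_comp_le_of_card_mul_le {ι κ : Type*} {v : ι → κ} {φ g : κ → ℝ}
    (hφ : ∀ z, 0 ≤ φ z) (hg : Summable g)
    (h : ∀ (z : κ) (T : Finset ι), (∀ i ∈ T, v i = z) → #T * φ z ≤ g z) :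
    Summable (fun i => φ (v i)) ∧ ∑' i, φ (v i) ≤ ∑' z, g z := by
  classical
  have hg0 : ∀ z, 0 ≤ g z := fun z => by simpa using h z ∅ (by simp)
  have hle : ∀ T : Finset ι, ∑ i ∈ T, φ (v i) ≤ ∑' z, g z := by
    intro T
    calc ∑ i ∈ T, φ (v i) = ∑ z ∈ T.image v, #{i ∈ T | v i = z} * φ z := by
          simp only [Finset.sum_comp, nsmul_eq_mul]
      _ ≤ ∑ z ∈ T.image v, g z :=
          Finset.sum_le_sum fun z _ => h z _ fun i hi => (mem_filter.mp hi).2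
      _ ≤ ∑' z, g z := hg.sum_le_tsum _ fun z _ => hg0 z
  exact ⟨summable_of_sum_le (fun i => hφ (v i)) hle,
    Real.tsum_le_of_sum_le (fun i => hφ (v i)) hle⟩

theorem pow_div_mul_rpow_le {x : ℝ} (hx : 1 ≤ x) (α : ℕ) (lam : ℝ) (z μ : ℕ) :
    x ^ (z / α) * x ^ (-(lam * ((z + μ : ℕ) : ℝ))) ≤
      x ^ (-(lam * (μ : ℝ))) * x ^ ((1 / (α : ℝ) - lam) * (z : ℝ)) := by
  have hx0 : 0 < x := by linarith
  rw [← Real.rpow_natCast, ← Real.rpow_add hx0, ← Real.rpow_add hx0]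
  apply Real.rpow_le_rpow_of_exponent_le hx
  have hdiv : ((z / α : ℕ) : ℝ) ≤ z / α := Nat.cast_div_le
  calc ((z / α : ℕ) : ℝ) + -(lam * ((z + μ : ℕ) : ℝ)) ≤ z / α + -(lam * ((z + μ : ℕ) : ℝ)) := by
        gcongr
    _ = -(lam * μ) + (1 / α - lam) * z := by
        push_cast
        ring

theorem add_add_one_le_two_mul_mul {μ z : ℝ} (hμ : 1 ≤ μ) (hz : 0 ≤ z) :
    z + μ + 1 ≤ 2 * μ * (z + 2) := by
  nlinarith [mul_nonneg hz (sub_nonneg.mpr hμ)]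

theorem card_mul_rpow_le_of_dickWeightV_eq_add_minWeight {b α s n m : ℕ}
    {C : Fin s → Matrix (Fin n) (Fin m) (ZMod b)} (hb : 1 < b) (hα : 0 < α) (lam : ℝ) {z : ℕ}
    {T : Finset (Fin s → ℕ)} (hT : ∀ k ∈ T, k ∈ dualNet b C ∧ k ≠ 0)
    (hw : ∀ k ∈ T, dickWeightV b α k = z + minWeight b α C) :
    #T * (b : ℝ) ^ (-(lam * ((z + minWeight b α C : ℕ) : ℝ))) ≤
      2 ^ (s * α - 1) * ((b : ℝ) - 1) ^ (s * α) * (minWeight b α C : ℝ) ^ (s * α - 1)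
        * (b : ℝ) ^ (-(lam * (minWeight b α C : ℝ)))
        * ((b : ℝ) ^ ((1 / (α : ℝ) - lam) * (z : ℝ)) * ((z : ℝ) + 2) ^ (s * α - 1)) := by
  have hb1 : (1 : ℝ) ≤ b := by exact_mod_cast hb.le
  have : (0 : ℝ) ≤ b - 1 := sub_nonneg.mpr hb1
  rcases T.eq_empty_or_nonempty with rfl | ⟨k, hk⟩
  · rw [card_empty, Nat.cast_zero, zero_mul]
    positivity
  have hμ : (1 : ℝ) ≤ minWeight b α C := by
    exact_mod_cast minWeight_pos hb hα (hT k hk).1 (hT k hk).2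
  have hcard : (#T : ℝ) ≤ b ^ (z / α) *
      (((z : ℝ) + minWeight b α C + 1) ^ (s * α - 1) * ((b : ℝ) - 1) ^ (s * α)) := by
    rw [← Nat.cast_pred (by omega)]
    exact_mod_cast card_le_of_dickWeightV_eq_add_minWeight hb hα (fun k hk => (hT k hk).1) hw
  set μ := minWeight b α C
  calc #T * (b : ℝ) ^ (-(lam * ((z + μ : ℕ) : ℝ)))
      ≤ b ^ (z / α) * ((2 * μ * ((z : ℝ) + 2)) ^ (s * α - 1) * ((b : ℝ) - 1) ^ (s * α))
          * (b : ℝ) ^ (-(lam * ((z + μ : ℕ) : ℝ))) := by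
        refine mul_le_mul_of_nonneg_right (hcard.trans ?_) (by positivity)
        gcongr
        exact add_add_one_le_two_mul_mul hμ (Nat.cast_nonneg z)
    _ = (2 * μ * ((z : ℝ) + 2)) ^ (s * α - 1) * ((b : ℝ) - 1) ^ (s * α)
          * (b ^ (z / α) * (b : ℝ) ^ (-(lam * ((z + μ : ℕ) : ℝ)))) := by ring
    _ ≤ (2 * μ * ((z : ℝ) + 2)) ^ (s * α - 1) * ((b : ℝ) - 1) ^ (s * α)
          * ((b : ℝ) ^ (-(lam * (μ : ℝ))) * (b : ℝ) ^ ((1 / (α : ℝ) - lam) * (z : ℝ))) := by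
        exact mul_le_mul_of_nonneg_left (pow_div_mul_rpow_le hb1 α lam z μ) (by positivity)
    _ = _ := by
        rw [mul_pow, mul_pow]
        ring

end Series

theorem stmt_5_general (b : ℕ) (hb : 1 < b) (α : ℕ) (hα : 0 < α) (s n m : ℕ)
    (C : Fin s → Matrix (Fin n) (Fin m) (ZMod b)) (lam : ℝ) (hlam : 1 / (α : ℝ) < lam) :
    Summable (fun z : ℕ =>
      (b : ℝ) ^ ((1 / (α : ℝ) - lam) * (z : ℝ)) * ((z : ℝ) + 2) ^ (s * α - 1)) ∧
    Summable (fun k : {k : Fin s → ℕ // k ∈ dualNet b C ∧ k ≠ 0} =>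
      (b : ℝ) ^ (-(lam * (dickWeightV b α k.val : ℝ)))) ∧
    (∑' k : {k : Fin s → ℕ // k ∈ dualNet b C ∧ k ≠ 0},
        (b : ℝ) ^ (-(lam * (dickWeightV b α k.val : ℝ))))
      ≤ 2 ^ (s * α - 1) * ((b : ℝ) - 1) ^ (s * α) * (minWeight b α C : ℝ) ^ (s * α - 1)
          * (b : ℝ) ^ (-(lam * (minWeight b α C : ℝ)))
          * ∑' z : ℕ, (b : ℝ) ^ ((1 / (α : ℝ) - lam) * (z : ℝ)) * ((z : ℝ) + 2) ^ (s * α - 1) := by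
  have hS : Summable fun z : ℕ =>
      (b : ℝ) ^ ((1 / (α : ℝ) - lam) * (z : ℝ)) * ((z : ℝ) + 2) ^ (s * α - 1) := by
    exact_mod_cast summable_rpow_mul_add_pow (x := b) (by exact_mod_cast hb)
      (sub_neg.mpr hlam) 2 (s * α - 1)
  refine ⟨hS, ?_⟩
  have hexcess : ∀ k : {k : Fin s → ℕ // k ∈ dualNet b C ∧ k ≠ 0},
      dickWeightV b α k.val - minWeight b α C + minWeight b α C = dickWeightV b α k.val :=
    fun k => Nat.sub_add_cancel (minWeight_le k.2.1 k.2.2)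
  have hsum := summable_comp_and_tsum_comp_le_of_card_mul_le
    (v := fun k : {k : Fin s → ℕ // k ∈ dualNet b C ∧ k ≠ 0} =>
      dickWeightV b α k.val - minWeight b α C)
    (φ := fun z => (b : ℝ) ^ (-(lam * ((z + minWeight b α C : ℕ) : ℝ))))
    (fun z => by positivity) (hS.mul_left _) fun z T hT => by
      rw [← T.card_map (Function.Embedding.subtype _)]
      refine card_mul_rpow_le_of_dickWeightV_eq_add_minWeight hb hα lam ?_ ?_
      all_goals simp only [mem_map, forall_exists_index, and_imp]
      · rintro _ k - rfl
        exact k.2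
      · rintro _ k hk rfl
        exact (hexcess k).symm.trans (by rw [hT k hk])
  simpa only [hexcess, tsum_mul_left] using hsum

/-- Lemma 3.3(2): weighted sum over the dual net, Dick weight `μ_α`, `α ≥ 2`. -/
theorem stmt_5 (b : ℕ) (hb : b.Prime) (α : ℕ) (hα : 2 ≤ α) (s n m : ℕ)
    (C : Fin s → Matrix (Fin n) (Fin m) (ZMod b)) (lam : ℝ) (hlam : 1 / (α : ℝ) < lam) :
    Summable (fun z : ℕ =>
      (b : ℝ) ^ ((1 / (α : ℝ) - lam) * (z : ℝ)) * ((z : ℝ) + 2) ^ (s * α - 1)) ∧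
    Summable (fun k : {k : Fin s → ℕ // k ∈ dualNet b C ∧ k ≠ 0} =>
      (b : ℝ) ^ (-(lam * (dickWeightV b α k.val : ℝ)))) ∧
    (∑' k : {k : Fin s → ℕ // k ∈ dualNet b C ∧ k ≠ 0},
        (b : ℝ) ^ (-(lam * (dickWeightV b α k.val : ℝ))))
      ≤ 2 ^ (s * α - 1) * ((b : ℝ) - 1) ^ (s * α) * (minWeight b α C : ℝ) ^ (s * α - 1)
          * (b : ℝ) ^ (-(lam * (minWeight b α C : ℝ)))
          * ∑' z : ℕ, (b : ℝ) ^ ((1 / (α : ℝ) - lam) * (z : ℝ)) * ((z : ℝ) + 2) ^ (s * α - 1) :=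
  stmt_5_general b hb.one_lt α (by omega) s n m C lam hlam
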